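/- arXiv:2009.07073 — 2 statements merged into one kernel-verified Lean document; each statement's English description precedes it below -/
import Mathlib

section
/- Let G be a finite simple graph and ℓ ≥ 1. A set B ⊆ V(G) is an ℓ-edge-leaky forcing set if and only if B is an (ℓ−1)-leaky forcing set (with respect to vertex leaks) such that for every set L of ℓ−1 vertex leaks and every vertex v ∈ V(G) \ B, there exist two distinct vertices x ≠ y with x→v ∈ ℱ_L(B) and y→v ∈ ℱ_L(B). -/
/-!
Zero forcing with leaks (vertex leaks, edge leaks, specified leaks, mixed leaks).

A force `u → v` is modelled as the ordered pair `(u, v) : V × V`.  All the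
leak notions are encoded by a set `P` of *prohibited* forces.
-/

variable {V : Type*}

/-- With blue set `S` and prohibited set of forces `P`, vertex `u` can force `v`:
`u` is blue, `v` is a white neighbor of `u`, every other neighbor of `u` is blue,
and the force `u → v` is not prohibited. -/
def CanForce (G : SimpleGraph V) (P : Set (V × V)) (S : Set V) (u v : V) : Prop :=
  u ∈ S ∧ v ∉ S ∧ G.Adj u v ∧ (∀ w, G.Adj u w → w ≠ v → w ∈ S) ∧ (u, v) ∉ P

/-- `Forced G P B v` means vertex `v` is eventually colored blue when the zero
forcing color change rule (avoiding the prohibited forces `P`) is applied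
exhaustively starting from the blue set `B`. -/
inductive Forced (G : SimpleGraph V) (P : Set (V × V)) (B : Set V) : V → Prop
  | init : ∀ {v : V}, v ∈ B → Forced G P B v
  | force : ∀ {u v : V}, G.Adj u v → (u, v) ∉ P → Forced G P B u →
      (∀ w, G.Adj u w → w ≠ v → Forced G P B w) → Forced G P B v

/-- `B^[∞]_P`, the set of blue vertices after exhaustively applying the zero
forcing rule with prohibited forces `P`, starting from `B`. -/
def closureSet (G : SimpleGraph V) (P : Set (V × V)) (B : Set V) : Set V :=
  {v | Forced G P B v}

/-- The prohibited forces corresponding to a set `L` of vertex leaks: a vertex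
leak may not perform any force. -/
def vertexLeaks (L : Set V) : Set (V × V) := {p | p.1 ∈ L}

/-- The prohibited forces corresponding to a set `L` of edge leaks: no force may
pass across an edge leak in either direction. -/
def edgeLeaksP (L : Set (Sym2 V)) : Set (V × V) := {p | s(p.1, p.2) ∈ L}

/-- `B` is an `ℓ`-leaky forcing set of `G`: despite any set of (at most) `ℓ`
vertex leaks, exhaustive forcing colors all of `V(G)` blue. -/
def IsLeakyForcingSet (G : SimpleGraph V) (ℓ : ℕ) (B : Set V) : Prop :=
  ∀ L : Finset V, L.card ≤ ℓ → closureSet G (vertexLeaks ↑L) B = Set.univ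

/-- `B` is an `ℓ`-edge-leaky forcing set of `G`: despite any set of (at most)
`ℓ` edge leaks, exhaustive forcing colors all of `V(G)` blue. -/
def IsEdgeLeakyForcingSet (G : SimpleGraph V) (ℓ : ℕ) (B : Set V) : Prop :=
  ∀ L : Finset (Sym2 V), ↑L ⊆ G.edgeSet → L.card ≤ ℓ →
    closureSet G (edgeLeaksP ↑L) B = Set.univ

/-- `B` is a specified `ℓ`-leaky forcing set of `G`: despite any set of (at
most) `ℓ` specified leaks (prohibited forces between adjacent vertices),
exhaustive forcing colors all of `V(G)` blue. -/
def IsSpecifiedLeakyForcingSet (G : SimpleGraph V) (ℓ : ℕ) (B : Set V) : Prop :=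
  ∀ L : Finset (V × V), (∀ p ∈ L, G.Adj p.1 p.2) → L.card ≤ ℓ →
    closureSet G (↑L) B = Set.univ

/-- `B` is a mixed `ℓ`-leaky forcing set of `G`: despite any set of (at most)
`ℓ` leaks, each a vertex leak, an edge leak, or a specified leak, exhaustive
forcing colors all of `V(G)` blue. -/
def IsMixedLeakyForcingSet (G : SimpleGraph V) (ℓ : ℕ) (B : Set V) : Prop :=
  ∀ (L₁ : Finset V) (L₂ : Finset (Sym2 V)) (L₃ : Finset (V × V)),
    ↑L₂ ⊆ G.edgeSet → (∀ p ∈ L₃, G.Adj p.1 p.2) →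
    L₁.card + L₂.card + L₃.card ≤ ℓ →
    closureSet G (vertexLeaks ↑L₁ ∪ edgeLeaksP ↑L₂ ∪ (↑L₃ : Set (V × V))) B = Set.univ

/-- A chronologically valid list of forces starting from a blue set. -/
def ValidList (G : SimpleGraph V) (P : Set (V × V)) : Set V → List (V × V) → Prop
  | _, [] => True
  | S, f :: l => CanForce G P S f.1 f.2 ∧ ValidList G P (insert f.2 S) l

/-- `F` is a forcing process (set of forces) of `B` in `G` with prohibited
forces `P`: the forces of `F` admit a chronological ordering in which each force
is valid and after applying all of them the whole graph is blue. -/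
def IsForcingProcess (G : SimpleGraph V) (P : Set (V × V)) (B : Set V)
    (F : Set (V × V)) : Prop :=
  ∃ l : List (V × V), {f | f ∈ l} = F ∧ ValidList G P B l ∧
    B ∪ Prod.snd '' F = Set.univ

/-- `B'` is obtained from `B` using `F`: `B` can color exactly `B'` blue using
only a subset of the forces in `F`, applied in a chronologically valid order. -/
def ObtainedUsing (G : SimpleGraph V) (P : Set (V × V)) (B : Set V) (F : Set (V × V))
    (B' : Set V) : Prop :=
  ∃ l : List (V × V), (∀ f ∈ l, f ∈ F) ∧ ValidList G P B l ∧
    B' = B ∪ Prod.snd '' {f | f ∈ l}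

/-- `ℱ_P(B)`: the set of forces that belong to some forcing process of `B`
(with prohibited forces `P`). -/
def potentialForces (G : SimpleGraph V) (P : Set (V × V)) (B : Set V) : Set (V × V) :=
  {f | ∃ F, IsForcingProcess G P B F ∧ f ∈ F}

/-- `Z_(ℓ)(G)`, the `ℓ`-leaky forcing number of `G`. -/
noncomputable def Zleaky (G : SimpleGraph V) (ℓ : ℕ) : ℕ :=
  sInf {n | ∃ B : Finset V, B.card = n ∧ IsLeakyForcingSet G ℓ ↑B}

/-- `Z'_(ℓ)(G)`, the `ℓ`-edge-leaky forcing number of `G`. -/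
noncomputable def ZedgeLeaky (G : SimpleGraph V) (ℓ : ℕ) : ℕ :=
  sInf {n | ∃ B : Finset V, B.card = n ∧ IsEdgeLeakyForcingSet G ℓ ↑B}

/-- `Z^s_(ℓ)(G)`, the specified `ℓ`-leaky forcing number of `G`. -/
noncomputable def Zspec (G : SimpleGraph V) (ℓ : ℕ) : ℕ :=
  sInf {n | ∃ B : Finset V, B.card = n ∧ IsSpecifiedLeakyForcingSet G ℓ ↑B}

/-- `Z^m_(ℓ)(G)`, the mixed `ℓ`-leaky forcing number of `G`. -/
noncomputable def Zmixed (G : SimpleGraph V) (ℓ : ℕ) : ℕ :=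
  sInf {n | ∃ B : Finset V, B.card = n ∧ IsMixedLeakyForcingSet G ℓ ↑B}

/-- Two sets of specified leaks on `V(G)` are isomorphic if some bijection of
the vertex set matches them up. -/
def LeaksIso (L₁ L₂ : Set (V × V)) : Prop :=
  ∃ φ : V ≃ V, ∀ x y : V, (x, y) ∈ L₁ ↔ (φ x, φ y) ∈ L₂

/-- `B` is an `L`-leaky forcing set of `G`: `B` colors all of `V(G)` blue
despite any set of specified leaks isomorphic to a subset of `L`. -/
def IsLLeakyForcingSet (G : SimpleGraph V) (L : Set (V × V)) (B : Set V) : Prop :=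
  ∀ L' : Set (V × V), (∃ L₂ ⊆ L, LeaksIso L' L₂) → closureSet G L' B = Set.univ

/-- `L` is a set of independent leaks: `|T(L)| = |L|` and `T(L) ∩ H(L) = ∅`. -/
def IsIndependentLeaks [DecidableEq V] (L : Finset (V × V)) : Prop :=
  (L.image Prod.fst).card = L.card ∧ Disjoint (L.image Prod.fst) (L.image Prod.snd)

/-- `I(L)`: the size of a largest set of independent leaks contained in `L`. -/
noncomputable def maxIndepLeaks [DecidableEq V] (L : Finset (V × V)) : ℕ :=
  sSup {n | ∃ M ⊆ L, IsIndependentLeaks M ∧ M.card = n}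

/-- `Z_L(G)`, the `L`-leaky forcing number of `G`. -/
noncomputable def ZLleaky (G : SimpleGraph V) (L : Set (V × V)) : ℕ :=
  sInf {n | ∃ B : Finset V, B.card = n ∧ IsLLeakyForcingSet G L ↑B}


theorem forced_mem_of_closed {G : SimpleGraph V} {P : Set (V × V)} {B T : Set V} (hB : B ⊆ T)
    (hT : ∀ u v, u ∈ T → v ∉ T → G.Adj u v → (∀ w, G.Adj u w → w ≠ v → w ∈ T) → (u, v) ∈ P)
    {v : V} (h : Forced G P B v) : v ∈ T := by
  induction h with
  | init h => exact hB h
  | @force u v ha hp _ _ ih1 ih2 =>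
    by_contra hv
    exact hp (hT u v ih1 hv ha ih2)

theorem closure_stuck {G : SimpleGraph V} {P : Set (V × V)} {B : Set V} (u v : V)
    (hu : u ∈ closureSet G P B) (hv : v ∉ closureSet G P B) (ha : G.Adj u v)
    (hw : ∀ w, G.Adj u w → w ≠ v → w ∈ closureSet G P B) : (u, v) ∈ P := by
  by_contra hp
  exact hv (Forced.force ha hp hu hw)

theorem validList_mono {G : SimpleGraph V} {P Q : Set (V × V)} (h : P ⊆ Q) :
    ∀ (l : List (V × V)) (S : Set V), ValidList G Q S l → ValidList G P S l
  | [], _, _ => trivial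
  | _ :: l, _, ⟨⟨a, b, c, d, e⟩, t⟩ => ⟨⟨a, b, c, d, fun q => e (h q)⟩, validList_mono h l _ t⟩

theorem validList_not_mem {G : SimpleGraph V} {P : Set (V × V)} {x v : V} :
    ∀ (l : List (V × V)) (S : Set V), ValidList G P S l → v ∈ S → (x, v) ∉ l
  | [], _, _, _ => by simp
  | f :: l, S, ⟨hc, t⟩, hv => by
    intro hm
    rcases List.mem_cons.1 hm with rfl | hm
    · exact hc.2.1 hv
    · exact validList_not_mem l _ t (Set.mem_insert_of_mem _ hv) hm

theorem validList_not_prohibited {G : SimpleGraph V} {P : Set (V × V)} {p : V × V} :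
    ∀ (l : List (V × V)) (S : Set V), ValidList G P S l → p ∈ l → p ∉ P
  | [], _, _, h => by simp at h
  | f :: l, S, ⟨hc, t⟩, hm => by
    rcases List.mem_cons.1 hm with rfl | hm
    · exact hc.2.2.2.2
    · exact validList_not_prohibited l _ t hm

theorem validList_first_exit {G : SimpleGraph V} {P : Set (V × V)} {T : Set V} {x v u₀ : V}
    (hv : v ∉ T)
    (hT : ∀ u w, u ∈ T → w ∉ T → G.Adj u w → (∀ z, G.Adj u z → z ≠ w → z ∈ T) →
      (u, w) ∉ P → u = u₀ ∧ w = v) :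
    ∀ (l : List (V × V)) (S : Set V), S ⊆ T → ValidList G P S l → (x, v) ∈ l → x = u₀
  | [], _, _, _, h => by simp at h
  | f :: l, S, hS, ⟨hc, t⟩, hm => by
    obtain ⟨a, b, c, d, e⟩ := hc
    by_cases hf : f.2 ∈ T
    · rcases List.mem_cons.1 hm with h | hm
      · rw [← h] at hf
        exact absurd hf hv
      · exact validList_first_exit hv hT l _ (Set.insert_subset hf hS) t hm
    · obtain ⟨h1, h2⟩ := hT f.1 f.2 (hS a) hf c (fun z hz hn => hS (d z hz hn)) e
      rcases List.mem_cons.1 hm with h | hm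
      · rw [← h] at h1
        exact h1
      · exact absurd hm (validList_not_mem l _ t (by rw [h2]; exact Set.mem_insert _ _))

theorem exists_validList [Finite V] {G : SimpleGraph V} {P : Set (V × V)} {B : Set V}
    (h : closureSet G P B = Set.univ) :
    ∀ (n : ℕ) (S : Set V), Sᶜ.ncard = n → B ⊆ S →
      ∃ l, ValidList G P S l ∧ S ∪ Prod.snd '' {f | f ∈ l} = Set.univ := by
  intro n
  induction n with
  | zero =>
    intro S hS _
    refine ⟨[], trivial, ?_⟩
    rw [Set.ncard_eq_zero] at hS
    simpa using hS
  | succ n ih =>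
    intro S hS hB
    have hne : S ≠ Set.univ := by
      rintro rfl
      simp at hS
    have : ∃ u v, CanForce G P S u v := by
      by_contra hcon
      push Not at hcon
      apply hne
      rw [Set.eq_univ_iff_forall]
      intro v
      have hv : v ∈ closureSet G P B := by rw [h]; trivial
      refine forced_mem_of_closed hB ?_ hv
      intro u v hu hv ha hw
      by_contra hp
      exact hcon u v ⟨hu, hv, ha, hw, hp⟩
    obtain ⟨u, v, hc⟩ := this
    have hcard : (insert v S)ᶜ.ncard = n := by
      have : (insert v S)ᶜ = Sᶜ \ {v} := by
        ext z
        simp [not_or, and_comm]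
      rw [this, Set.ncard_diff_singleton_of_mem (by exact hc.2.1), hS]
      rfl
    obtain ⟨l, hl, hu⟩ := ih _ hcard (hB.trans (Set.subset_insert _ _))
    refine ⟨(u, v) :: l, ⟨hc, hl⟩, ?_⟩
    rw [← hu]
    ext z
    simp only [Set.mem_union, Set.mem_image, Set.mem_setOf_eq, List.mem_cons, Set.mem_insert_iff]
    constructor
    · rintro (h | ⟨f, rfl | h, rfl⟩)
      · exact Or.inl (Or.inr h)
      · exact Or.inl (Or.inl rfl)
      · exact Or.inr ⟨f, h, rfl⟩
    · rintro ((rfl | h) | ⟨f, h, rfl⟩)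
      · exact Or.inr ⟨_, Or.inl rfl, rfl⟩
      · exact Or.inl h
      · exact Or.inr ⟨f, Or.inr h, rfl⟩

theorem exists_potential [Finite V] {G : SimpleGraph V} {P Q : Set (V × V)} {B : Set V}
    (hPQ : P ⊆ Q) (h : closureSet G Q B = Set.univ) {v : V} (hv : v ∉ B) :
    ∃ x, (x, v) ∉ Q ∧ (x, v) ∈ potentialForces G P B := by
  obtain ⟨l, hl, hu⟩ := exists_validList h _ B rfl subset_rfl
  have hm : v ∈ B ∪ Prod.snd '' {f | f ∈ l} := by rw [hu]; trivial
  rcases hm with hm | ⟨⟨x, w⟩, hf, rfl⟩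
  · exact absurd hm hv
  · exact ⟨x, validList_not_prohibited l _ hl hf, _, ⟨l, rfl, validList_mono hPQ l _ hl, hu⟩, hf⟩

theorem edgeLeaky_aux [DecidableEq V] {G : SimpleGraph V} {ℓ : ℕ} (hℓ : 1 ≤ ℓ) {B : Set V}
    (h : IsEdgeLeakyForcingSet G ℓ B) (L : Finset V) (hL : L.card ≤ ℓ - 1) (Q : Set (V × V))
    (hQ : ∃ p : V × V, Q ⊆ {p}) :
    closureSet G (vertexLeaks ↑L ∪ Q) B = Set.univ := by
  classical
  obtain ⟨p, hp⟩ := hQ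
  set S := closureSet G (vertexLeaks ↑L ∪ Q) B with hS
  have hg : ∀ u, ∃ w, ∀ w', w' ∉ S → G.Adj u w' → (∀ z, G.Adj u z → z ≠ w' → z ∈ S) →
      w' = w := by
    intro u
    by_cases hw : ∃ w, w ∉ S ∧ G.Adj u w
    · obtain ⟨w, hw, ha⟩ := hw
      refine ⟨w, fun w' _ _ hz => ?_⟩
      by_contra hne
      exact hw (hz w ha (Ne.symm hne))
    · exact ⟨u, fun w' h1 h2 _ => absurd ⟨w', h1, h2⟩ hw⟩
  choose g hg using hg
  let E : Finset (Sym2 V) :=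
    (insert s(p.1, p.2) (L.image fun u => s(u, g u))).filter fun e => e ∈ G.edgeSet
  have hE : E.card ≤ ℓ := by
    calc E.card ≤ _ := Finset.card_filter_le _ _
      _ ≤ (L.image fun u => s(u, g u)).card + 1 := Finset.card_insert_le _ _
      _ ≤ L.card + 1 := by gcongr; exact Finset.card_image_le
      _ ≤ ℓ := by omega
  have hc := h E (by intro e he; exact (Finset.mem_filter.1 (Finset.mem_coe.1 he)).2) hE
  rw [Set.eq_univ_iff_forall]
  intro v
  have hv : v ∈ closureSet G (edgeLeaksP ↑E) B := by rw [hc]; trivial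
  refine forced_mem_of_closed (fun b hb => Forced.init hb) ?_ hv
  intro u w hu hw ha hz
  change s(u, w) ∈ (E : Set (Sym2 V))
  refine Finset.mem_coe.2 (Finset.mem_filter.2 ⟨?_, ha⟩)
  rcases closure_stuck u w hu hw ha hz with hl | hq
  · refine Finset.mem_insert_of_mem (Finset.mem_image.2 ⟨u, hl, ?_⟩)
    rw [hg u w hw ha hz]
  · have := hp hq
    rw [Set.mem_singleton_iff] at this
    rw [← this]
    exact Finset.mem_insert_self _ _

theorem edgeLeaky_of [Fintype V] [DecidableEq V] (G : SimpleGraph V) (ℓ : ℕ)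
    (hℓ : 1 ≤ ℓ) (B : Set V) (h1 : IsLeakyForcingSet G (ℓ - 1) B)
    (h2 : ∀ L : Finset V, L.card ≤ ℓ - 1 → ∀ v : V, v ∉ B →
          ∃ x y : V, x ≠ y ∧ (x, v) ∈ potentialForces G (vertexLeaks ↑L) B ∧
            (y, v) ∈ potentialForces G (vertexLeaks ↑L) B) :
    IsEdgeLeakyForcingSet G ℓ B := by
  classical
  intro E _ hE
  set S := closureSet G (edgeLeaksP ↑E) B with hS
  have hBS : B ⊆ S := fun b hb => Forced.init hb
  by_contra hne
  let R : V → V → Prop := fun u w => u ∈ S ∧ w ∉ S ∧ G.Adj u w ∧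
    ∀ z, G.Adj u z → z ≠ w → z ∈ S
  let U : Finset V := Finset.univ.filter fun u => ∃ w, R u w
  have hg : ∀ u, ∃ w, u ∈ U → R u w := by
    intro u
    by_cases hu : u ∈ U
    · obtain ⟨w, hw⟩ := (Finset.mem_filter.1 hu).2
      exact ⟨w, fun _ => hw⟩
    · exact ⟨u, fun h => absurd h hu⟩
  choose g hg using hg
  have hcard : U.card ≤ E.card := by
    refine Finset.card_le_card_of_injOn (fun u => s(u, g u)) ?_ ?_
    · intro u hu
      obtain ⟨a, b, c, d⟩ := hg u hu
      exact closure_stuck u _ a b c d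
    · intro u hu u' hu' he
      rcases Sym2.eq_iff.1 he with ⟨h, _⟩ | ⟨h, _⟩
      · exact h
      · exact absurd (h ▸ (hg u hu).1) (hg u' hu').2.1
  have hUmem : ∀ u w, R u w → u ∈ U := fun u w h =>
    Finset.mem_filter.2 ⟨Finset.mem_univ _, w, h⟩
  by_cases hU : U.card ≤ ℓ - 1
  · apply hne
    rw [Set.eq_univ_iff_forall]
    intro v
    have hv : v ∈ closureSet G (vertexLeaks ↑U) B := by rw [h1 U hU]; trivial
    exact forced_mem_of_closed hBS (fun u w a b c d => hUmem u w ⟨a, b, c, d⟩) hv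
  · have hpos : 0 < U.card := by omega
    obtain ⟨u₀, hu₀⟩ := Finset.card_pos.1 hpos
    have hR := hg u₀ hu₀
    have key : ∀ x, (x, g u₀) ∈ potentialForces G (vertexLeaks ↑(U.erase u₀)) B → x = u₀ := by
      rintro x ⟨F, ⟨l, rfl, hl, _⟩, hx⟩
      refine validList_first_exit hR.2.1 ?_ l B hBS hl hx
      intro u w a b c d e
      have hu : u = u₀ := by
        by_contra hn
        exact e (Finset.mem_coe.2 (Finset.mem_erase.2 ⟨hn, hUmem u w ⟨a, b, c, d⟩⟩))
      subst hu
      refine ⟨rfl, ?_⟩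
      by_contra hn
      exact b (hR.2.2.2 w c hn)
    obtain ⟨x, y, hxy, hx, hy⟩ := h2 (U.erase u₀)
      (by rw [Finset.card_erase_of_mem hu₀]; omega) (g u₀) (fun hb => hR.2.1 (hBS hb))
    exact hxy ((key x hx).trans (key y hy).symm)

/-- Theorem `edgesetofforces`: `B` is an `ℓ`-edge-leaky
forcing set iff `B` is an `(ℓ-1)`-leaky forcing set (w.r.t. vertex leaks) such
that for every set `L` of `ℓ-1` vertex leaks and every `v ∈ V(G) \ B` there are
two distinct forces `x→v, y→v ∈ ℱ_L(B)`. -/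
theorem statement5 [Fintype V] [DecidableEq V] (G : SimpleGraph V) (ℓ : ℕ)
    (hℓ : 1 ≤ ℓ) (B : Set V) :
    IsEdgeLeakyForcingSet G ℓ B ↔
      (IsLeakyForcingSet G (ℓ - 1) B ∧
        ∀ L : Finset V, L.card ≤ ℓ - 1 → ∀ v : V, v ∉ B →
          ∃ x y : V, x ≠ y ∧ (x, v) ∈ potentialForces G (vertexLeaks ↑L) B ∧
            (y, v) ∈ potentialForces G (vertexLeaks ↑L) B) := by
  constructor
  · intro h
    have h0 : IsLeakyForcingSet G (ℓ - 1) B := by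
      intro L hL
      by_cases hV : Nonempty V
      · obtain ⟨a⟩ := hV
        have := edgeLeaky_aux hℓ h L hL ∅ ⟨(a, a), Set.empty_subset _⟩
        rwa [Set.union_empty] at this
      · rw [Set.eq_univ_iff_forall]
        intro v
        exact absurd ⟨v⟩ hV
    refine ⟨h0, ?_⟩
    intro L hL v hv
    obtain ⟨x, _, hx⟩ := exists_potential subset_rfl (h0 L hL) hv
    obtain ⟨y, hy', hy⟩ := exists_potential Set.subset_union_left
      (edgeLeaky_aux hℓ h L hL {(x, v)} ⟨(x, v), subset_rfl⟩) hv
    refine ⟨x, y, ?_, hx, hy⟩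
    rintro rfl
    exact hy' (Or.inr rfl)
  · rintro ⟨h1, h2⟩
    exact edgeLeaky_of G ℓ hℓ B h1 h2
end

section
/- Let G be a finite simple graph and ℓ ≥ 1. A set B ⊆ V(G) is a mixed ℓ-leaky forcing set if and only if B is an (ℓ−1)-leaky forcing set (with respect to vertex leaks) such that for every set L of ℓ−1 vertex leaks and every vertex v ∈ V(G) \ B, there exist two distinct vertices x ≠ y with x→v ∈ ℱ_L(B) and y→v ∈ ℱ_L(B). -/
/-!
Zero forcing with leaks (vertex leaks, edge leaks, specified leaks, mixed leaks).

A force `u → v` is modelled as the ordered pair `(u, v) : V × V`.  All the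
leak notions are encoded by a set `P` of *prohibited* forces.
-/

variable {V : Type*}

theorem aux_forced_subset (G : SimpleGraph V) (P : Set (V × V)) (B S : Set V) (hBS : B ⊆ S)
    (hS : ∀ u v, ¬ CanForce G P S u v) : closureSet G P B ⊆ S := by
  intro v hv
  induction hv with
  | init h => exact hBS h
  | @force u v hadj hP _ _ ih1 ih2 =>
    by_contra hvS
    exact hS u v ⟨ih1, hvS, hadj, ih2, hP⟩

theorem aux_closed (G : SimpleGraph V) (P : Set (V × V)) (B : Set V) (u v : V) :
    ¬ CanForce G P (closureSet G P B) u v := by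
  rintro ⟨h1, h2, h3, h4, h5⟩
  exact h2 (Forced.force h3 h5 h1 h4)

theorem aux_exists_list [Fintype V] (G : SimpleGraph V) (P : Set (V × V)) (B : Set V)
    (h : closureSet G P B = Set.univ) : ∀ (n : ℕ) (S : Set V), B ⊆ S → Sᶜ.ncard = n →
    ∃ l, ValidList G P S l ∧ S ∪ Prod.snd '' {f | f ∈ l} = Set.univ := by
  intro n
  induction n with
  | zero =>
    intro S hBS hn
    refine ⟨[], trivial, ?_⟩
    rw [Set.ncard_eq_zero] at hn
    simpa using hn
  | succ n ih =>
    intro S hBS hn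
    have : ∃ u v, CanForce G P S u v := by
      by_contra hc
      push Not at hc
      have h1 := aux_forced_subset G P B S hBS hc
      rw [h] at h1
      have h2 : S = Set.univ := Set.univ_subset_iff.1 h1
      rw [h2] at hn
      simp at hn
    obtain ⟨u, v, huv⟩ := this
    have hc : (insert v S)ᶜ.ncard = n := by
      have e : (insert v S)ᶜ = Sᶜ \ {v} := by
        ext x; simp; tauto
      rw [e, Set.ncard_diff_singleton_of_mem (by exact huv.2.1), hn]
      rfl
    obtain ⟨l, hl, hl2⟩ := ih (insert v S) (hBS.trans (Set.subset_insert _ _)) hc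
    refine ⟨(u, v) :: l, ⟨huv, hl⟩, ?_⟩
    rw [← hl2]
    ext x
    simp only [Set.mem_union, Set.mem_image, Set.mem_setOf_eq, List.mem_cons, Set.mem_insert_iff]
    constructor
    · rintro (h | ⟨f, rfl | hf, rfl⟩)
      · exact Or.inl (Or.inr h)
      · exact Or.inl (Or.inl rfl)
      · exact Or.inr ⟨f, hf, rfl⟩
    · rintro ((rfl | h) | ⟨f, hf, rfl⟩)
      · exact Or.inr ⟨_, Or.inl rfl, rfl⟩
      · exact Or.inl h
      · exact Or.inr ⟨f, Or.inr hf, rfl⟩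

theorem aux_valid_mono (G : SimpleGraph V) {P P' : Set (V × V)} (hP : P ⊆ P') :
    ∀ (l : List (V × V)) (S : Set V), ValidList G P' S l → ValidList G P S l := by
  intro l
  induction l with
  | nil => intro S _; trivial
  | cons f l ih =>
    rintro S ⟨⟨h1, h2, h3, h4, h5⟩, hl⟩
    exact ⟨⟨h1, h2, h3, h4, fun h => h5 (hP h)⟩, ih _ hl⟩

theorem aux_valid_mem (G : SimpleGraph V) {P : Set (V × V)} :
    ∀ (l : List (V × V)) (S : Set V), ValidList G P S l → ∀ f ∈ l,
      f.2 ∉ S ∧ G.Adj f.1 f.2 ∧ f ∉ P := by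
  intro l
  induction l with
  | nil => intro S _ f hf; simp at hf
  | cons g l ih =>
    rintro S ⟨⟨h1, h2, h3, h4, h5⟩, hl⟩ f hf
    rcases List.mem_cons.1 hf with rfl | hf
    · exact ⟨h2, h3, h5⟩
    · obtain ⟨a, b⟩ := ih _ hl f hf
      exact ⟨fun h => a (Set.mem_insert_of_mem _ h), b⟩

theorem aux_first_exit (G : SimpleGraph V) {P : Set (V × V)} (S : Set V) (u0 w0 x : V)
    (hw : w0 ∉ S) (H : ∀ a b, CanForce G P S a b → a = u0 ∧ b = w0) :
    ∀ (l : List (V × V)) (S0 : Set V), S0 ⊆ S → ValidList G P S0 l → (x, w0) ∈ l → x = u0 := by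
  intro l
  induction l with
  | nil => intro S0 _ _ hf; simp at hf
  | cons g l ih =>
    rintro S0 hS0 ⟨⟨h1, h2, h3, h4, h5⟩, hl⟩ hf
    by_cases hg : g.2 ∈ S
    · rcases List.mem_cons.1 hf with rfl | hf
      · exact absurd hg hw
      · exact ih _ (Set.insert_subset hg hS0) hl hf
    · obtain ⟨e1, e2⟩ := H g.1 g.2 ⟨hS0 h1, hg, h3, fun w a b => hS0 (h4 w a b), h5⟩
      rcases List.mem_cons.1 hf with rfl | hf
      · exact e1
      · exact absurd (by simp [e2]) (aux_valid_mem G l _ hl _ hf).1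

/-- A completely forcing set with prohibited forces `P'` yields a potential force into `v`. -/
theorem aux_exists_force [Fintype V] (G : SimpleGraph V) {P P' : Set (V × V)} (hP : P ⊆ P')
    (B : Set V) (h : closureSet G P' B = Set.univ) (v : V) (hv : v ∉ B) :
    ∃ x, (x, v) ∈ potentialForces G P B ∧ G.Adj x v ∧ (x, v) ∉ P' := by
  obtain ⟨l, hl, hl2⟩ := aux_exists_list G P' B h _ B subset_rfl rfl
  have : v ∈ B ∪ Prod.snd '' {f | f ∈ l} := by rw [hl2]; trivial
  rcases this with h | ⟨⟨x, v'⟩, hf, rfl⟩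
  · exact absurd h hv
  · exact ⟨x, ⟨_, ⟨l, rfl, aux_valid_mono G hP l B hl, hl2⟩, hf⟩,
      (aux_valid_mem G l B hl _ hf).2⟩

theorem aux_card [Fintype V] [DecidableEq V] (S : Set V) (T : Finset V)
    (L₁ : Finset V) (L₂ : Finset (Sym2 V)) (L₃ : Finset (V × V))
    (hT : ∀ u ∈ T, u ∈ S ∧ ∃ w, w ∉ S ∧
      (u, w) ∈ vertexLeaks (L₁ : Set V) ∪ edgeLeaksP (L₂ : Set (Sym2 V)) ∪ (L₃ : Set (V × V))) :
    T.card ≤ L₁.card + L₂.card + L₃.card := by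
  classical
  have hg : ∀ e : Sym2 V, ∃ u, ∀ a ∈ S, ∀ w, w ∉ S → e = s(a, w) → u = a := by
    intro e
    by_cases h : ∃ a ∈ S, ∃ w, w ∉ S ∧ e = s(a, w)
    · obtain ⟨a, ha, w, hw, rfl⟩ := h
      refine ⟨a, fun a' ha' w' hw' he => ?_⟩
      rcases Sym2.eq_iff.1 he with ⟨h1, _⟩ | ⟨h1, _⟩
      · exact h1
      · exact absurd (h1 ▸ ha) hw'
    · exact ⟨e.out.1, fun a ha w hw he => absurd ⟨a, ha, w, hw, he⟩ h⟩
  choose g hg using hg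
  have hsub : T ⊆ (L₁ ∪ L₂.image g) ∪ L₃.image Prod.fst := by
    intro u hu
    obtain ⟨huS, w, hw, (h | h) | h⟩ := hT u hu
    · exact Finset.mem_union_left _ (Finset.mem_union_left _ h)
    · exact Finset.mem_union_left _ (Finset.mem_union_right _
        (Finset.mem_image.2 ⟨s(u, w), h, hg _ u huS w hw rfl⟩))
    · exact Finset.mem_union_right _ (Finset.mem_image.2 ⟨(u, w), h, rfl⟩)
  have h1 := Finset.card_le_card hsub
  have h2 := Finset.card_union_le (L₁ ∪ L₂.image g) (L₃.image Prod.fst)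
  have h3 := Finset.card_union_le L₁ (L₂.image g)
  have h4 : (L₂.image g).card ≤ L₂.card := Finset.card_image_le
  have h5 : (L₃.image Prod.fst).card ≤ L₃.card := Finset.card_image_le
  omega

/-- `B` is a mixed `ℓ`-leaky forcing set iff `B` is an
`(ℓ-1)`-leaky forcing set (w.r.t. vertex leaks) such that for every set `L` of
`ℓ-1` vertex leaks and every `v ∈ V(G) \ B` there are two distinct forces
`x→v, y→v ∈ ℱ_L(B)`. -/
theorem statement11 [Fintype V] [DecidableEq V] (G : SimpleGraph V) (ℓ : ℕ)
    (hℓ : 1 ≤ ℓ) (B : Set V) :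
    IsMixedLeakyForcingSet G ℓ B ↔
      (IsLeakyForcingSet G (ℓ - 1) B ∧
        ∀ L : Finset V, L.card ≤ ℓ - 1 → ∀ v : V, v ∉ B →
          ∃ x y : V, x ≠ y ∧ (x, v) ∈ potentialForces G (vertexLeaks ↑L) B ∧
            (y, v) ∈ potentialForces G (vertexLeaks ↑L) B) := by
  classical
  constructor
  · intro hM
    refine ⟨fun L hL => ?_, fun L hL v hv => ?_⟩
    · have := hM L ∅ ∅ (by simp) (by simp) (by simp; omega)
      simpa [edgeLeaksP] using this
    · have h0 := hM L ∅ ∅ (by simp) (by simp) (by simp; omega)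
      obtain ⟨x, hx, hadj, _⟩ := aux_exists_force G (P := vertexLeaks (L : Set V))
        (fun p hp => Or.inl (Or.inl hp)) B h0 v hv
      have h1 := hM L ∅ {(x, v)} (by simp) (by simpa using hadj) (by simp; omega)
      obtain ⟨y, hy, _, hyP⟩ := aux_exists_force G (P := vertexLeaks (L : Set V))
        (fun p hp => Or.inl (Or.inl hp)) B h1 v hv
      refine ⟨x, y, ?_, hx, hy⟩
      rintro rfl
      exact hyP (Or.inr (by simp))
  · rintro ⟨hL, hF⟩ L₁ L₂ L₃ _ _ hcard
    by_contra hne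
    set P := vertexLeaks (L₁ : Set V) ∪ edgeLeaksP (L₂ : Set (Sym2 V)) ∪ (L₃ : Set (V × V)) with hPdef
    set S := closureSet G P B with hSdef
    have hBS : B ⊆ S := fun v hv => Forced.init hv
    let T : Finset V := Finset.univ.filter (fun u => ∃ w, CanForce G ∅ S u w)
    have hmemT : ∀ u, u ∈ T ↔ ∃ w, CanForce G ∅ S u w := by intro u; simp [T]
    have hTP : ∀ u w, CanForce G ∅ S u w → (u, w) ∈ P := by
      rintro u w ⟨h1, h2, h3, h4, _⟩
      by_contra h5
      exact aux_closed G P B u w ⟨h1, h2, h3, h4, h5⟩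
    have hTcard : T.card ≤ ℓ := by
      refine (aux_card S T L₁ L₂ L₃ ?_).trans hcard
      intro u hu
      obtain ⟨w, hw⟩ := (hmemT u).1 hu
      exact ⟨hw.1, w, hw.2.1, hTP u w hw⟩
    have hweak : ∀ (Q : Set (V × V)) u w, CanForce G Q S u w → CanForce G ∅ S u w := by
      rintro Q u w ⟨h1, h2, h3, h4, _⟩
      exact ⟨h1, h2, h3, h4, by simp⟩
    have hbig : ℓ - 1 < T.card := by
      by_contra hc
      have h1 := hL T (by omega)
      have h2 := aux_forced_subset G (vertexLeaks (T : Set V)) B S hBS (by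
        intro u w huw
        exact huw.2.2.2.2 ((hmemT u).2 ⟨w, hweak _ u w huw⟩))
      rw [h1] at h2
      exact hne (Set.univ_subset_iff.1 h2)
    obtain ⟨u0, hu0⟩ : T.Nonempty := Finset.card_pos.1 (by omega)
    obtain ⟨w0, hw0⟩ := (hmemT u0).1 hu0
    have hLc : (T.erase u0).card ≤ ℓ - 1 := by
      rw [Finset.card_erase_of_mem hu0]; omega
    have key : ∀ x, (x, w0) ∈ potentialForces G (vertexLeaks ((T.erase u0 : Finset V) : Set V)) B →
        x = u0 := by
      rintro x ⟨F, ⟨l, rfl, hl, _⟩, hx⟩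
      refine aux_first_exit G S u0 w0 x hw0.2.1 ?_ l B hBS hl hx
      intro a b hab
      have ha : a = u0 := by
        by_contra hne'
        exact hab.2.2.2.2 (Finset.mem_coe.2
          (Finset.mem_erase.2 ⟨hne', (hmemT a).2 ⟨b, hweak _ a b hab⟩⟩))
      subst ha
      refine ⟨rfl, ?_⟩
      by_contra hb
      exact hab.2.1 (hw0.2.2.2.1 b hab.2.2.1 hb)
    obtain ⟨x, y, hxy, hx, hy⟩ := hF (T.erase u0) hLc w0 (fun h => hw0.2.1 (hBS h))
    exact hxy ((key x hx).trans (key y hy).symm)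
end
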